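/- For every integer a ≥ 4, the MV assignment M^a V^a on the 1×(2a+1) strip of stamps satisfies c(M^a V^a) = 2a² − 3a + 2. -/

import Mathlib

/-- A crease direction: mountain or valley. -/
inductive MV : Type
  | M : MV
  | V : MV
deriving DecidableEq

/-- The value `σ(i)` of a layer ordering at face `i`, as a natural number
(`0` if `i` is out of range). -/
def faceVal {n : ℕ} (σ : Equiv.Perm (Fin n)) (i : ℕ) : ℕ :=
  if h : i < n then (σ ⟨i, h⟩ : Fin n) else 0

/-- Condition (1): the layer ordering respects the mountain–valley assignment. -/
def MVRelations (n : ℕ) (μ : ℕ → MV) (σ : Equiv.Perm (Fin n)) : Prop :=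
  ∀ i, i + 1 < n →
    if (μ i = MV.M ∧ Even i) ∨ (μ i = MV.V ∧ Odd i)
    then faceVal σ (i + 1) < faceVal σ i
    else faceVal σ i < faceVal σ (i + 1)

/-- `x` lies strictly between `lo` and `hi` (in either order). -/
def StrictlyBetween (x a b : ℕ) : Prop := min a b < x ∧ x < max a b

/-- Condition (2): no two creases on the same side cross. -/
def NoCrossings (n : ℕ) (σ : Equiv.Perm (Fin n)) : Prop :=
  ∀ i j, i + 1 < n → j + 1 < n → i % 2 = j % 2 →
    ¬ Xor' (StrictlyBetween (faceVal σ j) (faceVal σ i) (faceVal σ (i + 1)))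
           (StrictlyBetween (faceVal σ (j + 1)) (faceVal σ i) (faceVal σ (i + 1)))

/-- A valid layer ordering for the MV assignment `μ` on the `1 × n` strip. -/
def ValidLayerOrdering (n : ℕ) (μ : ℕ → MV) (σ : Equiv.Perm (Fin n)) : Prop :=
  MVRelations n μ σ ∧ NoCrossings n σ

/-- `c(μ)`: the number of valid layer orderings for `μ` on the `1 × n` strip. -/
noncomputable def foldCount (n : ℕ) (μ : ℕ → MV) : ℕ :=
  Nat.card {σ : Equiv.Perm (Fin n) // ValidLayerOrdering n μ σ}


/-- `u` lies beyond `v` in the direction given by the parity of `k`. -/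
def Bey (k : ℕ) (u v : ℤ) : Prop := (k % 2 = 0 → v < u) ∧ (k % 2 = 1 → u < v)

/-- The pair `c, d` does not cross the pair `a, b`. -/
def NCr (a b c d : ℤ) : Prop :=
  (min a b < c ∧ c < max a b) ↔ (min a b < d ∧ d < max a b)

/-- A noncrossing zigzag. -/
structure Zig (a : ℕ) (x : ℕ → ℤ) : Prop where
  inj : ∀ i j, i < j → j ≤ a → x i ≠ x j
  zig : ∀ i, i < a → Bey i (x i) (x (i + 1))
  nc : ∀ i j, i < a → j < a → i % 2 = j % 2 → NCr (x i) (x (i + 1)) (x j) (x (j + 1))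

/-- Clamp of `p` to the interval from `l` to `h`. -/
def cl (l p h : ℕ) : ℕ := max l (min p h)

/-- The order of a zigzag with turning point `p`. -/
def OrdZ (a p : ℕ) (x : ℕ → ℤ) : Prop :=
  ∀ i j, i < j → j ≤ a → Bey (cl (i + 1) p j) (x j) (x i)

theorem zig_exists {a : ℕ} {x : ℕ → ℤ} (h : Zig a x) (ha : 1 ≤ a) :
    ∃ p, 1 ≤ p ∧ p ≤ a ∧ OrdZ a p x := by
  classical
  have hex : ∃ p, 1 ≤ p ∧ (p = a ∨ Bey (p + 1) (x (p - 1)) (x (p + 1))) := ⟨a, ha, Or.inl rfl⟩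
  obtain ⟨p, ⟨hp1, hp⟩, hmin⟩ : ∃ p, (1 ≤ p ∧ (p = a ∨ Bey (p + 1) (x (p - 1)) (x (p + 1)))) ∧
      ∀ m, m < p → ¬ (1 ≤ m ∧ (m = a ∨ Bey (m + 1) (x (m - 1)) (x (m + 1)))) :=
    ⟨Nat.find hex, Nat.find_spec hex, fun m hm => Nat.find_min hex hm⟩
  have hpa : p ≤ a := by
    by_contra hc
    exact hmin a (by omega) ⟨ha, Or.inl rfl⟩
  have hout1 : ∀ i, i + 2 ≤ p → Bey i (x (i + 2)) (x i) := by
    intro i hi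
    have h1 := hmin (i + 1) (by omega)
    have h2 := h.inj i (i + 2) (by omega) (by omega)
    simp only [Bey, Nat.add_sub_cancel] at h1 ⊢
    constructor
    · intro hh
      by_contra hc
      exact h1 ⟨by omega, Or.inr ⟨fun _ => by show x (i + 2) < x i; omega, by omega⟩⟩
    · intro hh
      by_contra hc
      exact h1 ⟨by omega, Or.inr ⟨by omega, fun _ => by show x i < x (i + 2); omega⟩⟩
  have hout : ∀ j, j ≤ p → ∀ i, i < j → Bey j (x j) (x i) := by
    intro j
    induction j using Nat.strong_induction_on with
    | _ j ih =>
      intro hj i hi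
      obtain ⟨k, rfl⟩ : ∃ k, j = k + 1 := ⟨j - 1, by omega⟩
      have hz := h.zig k (by omega)
      rcases Nat.lt_or_ge i k with hik | hik
      · obtain ⟨l, rfl⟩ : ∃ l, k = l + 1 := ⟨k - 1, by omega⟩
        have ho := hout1 l (by omega)
        rcases Nat.lt_or_ge i l with hil | hil
        · have := ih l (by omega) (by omega) i hil
          simp only [Bey] at *
          constructor <;> intro _ <;> have e : l + 1 + 1 = l + 2 := rfl <;> rw [e] <;> omega
        · obtain rfl : i = l := by omega
          simp only [Bey] at *
          constructor <;> intro _ <;> have e : i + 1 + 1 = i + 2 := rfl <;> rw [e] <;> omega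
      · obtain rfl : i = k := by omega
        simp only [Bey] at *
        omega
  have hin1 : ∀ d, p + d < a → Bey (p + d + 1) (x (p + d - 1)) (x (p + d + 1)) := by
    intro d
    induction d with
    | zero => 
      intro hd
      rcases hp with hp | hp
      · omega
      · exact hp
    | succ d ih =>
      intro hd
      have ih := ih (by omega)
      have h1 := h.nc (p + d - 1) (p + d + 1) (by omega) (by omega) (by omega)
      have z0 := h.zig (p + d - 1) (by omega)
      have z1 := h.zig (p + d) (by omega)
      have z2 := h.zig (p + d + 1) (by omega)
      have i1 := h.inj (p + d) (p + d + 2) (by omega) (by omega)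
      have e1 : p + d - 1 + 1 = p + d := by omega
      have e2 : p + (d + 1) - 1 = p + d := by omega
      have e3 : p + (d + 1) + 1 = p + d + 2 := by omega
      have e4 : p + d + 1 + 1 = p + d + 2 := by omega
      rw [e2, e3]
      rw [e1] at h1 z0
      rw [e4] at h1 z2
      generalize x (p + d) = u at *
      generalize x (p + d + 2) = v at *
      generalize x (p + d + 1) = w at *
      generalize x (p + d - 1) = t at *
      simp only [Bey, NCr] at *
      omega
  have hin : ∀ d, ∀ i, p ≤ i → i + d + 1 ≤ a → Bey (i + 1) (x (i + d + 1)) (x i) := by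
    intro d
    induction d using Nat.strong_induction_on with
    | _ d ih =>
      intro i hi hd
      have z0 := h.zig i (by omega)
      match d, ih with
      | 0, _ => simp only [Bey, Nat.add_zero] at *; omega
      | 1, _ =>
        have := hin1 (i - p + 1) (by omega)
        have e1 : p + (i - p + 1) - 1 = i := by omega
        have e2 : p + (i - p + 1) + 1 = i + 2 := by omega
        rw [e1, e2] at this
        simp only [Bey] at *
        constructor <;> intro _ <;> have e : i + 1 + 1 = i + 2 := rfl <;> rw [e] <;> omega
      | d + 2, ih =>
        have := hin1 (i - p + 1) (by omega)
        have e1 : p + (i - p + 1) - 1 = i := by omega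
        have e2 : p + (i - p + 1) + 1 = i + 2 := by omega
        rw [e1, e2] at this
        have h2 := ih d (by omega) (i + 2) (by omega) (by omega)
        have e3 : i + (d + 2) + 1 = i + 2 + d + 1 := by omega
        rw [e3]
        simp only [Bey] at *
        omega
  have hin' : ∀ i j, p ≤ i → i < j → j ≤ a → Bey (i + 1) (x j) (x i) := by
    intro i j h1 h2 h3
    have := hin (j - i - 1) i h1 (by omega)
    rwa [show i + (j - i - 1) + 1 = j by omega] at this
  have hmid : ∀ i j, i < p → p < j → j ≤ a → Bey p (x j) (x i) := by
    intro i j h1 h2 h3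
    have hq : ∀ i, i < p → Bey p (x (p + 1)) (x i) := by
      intro i hi
      have a1 := hin1 0 (by omega)
      simp only [Nat.add_zero] at a1
      have z0 := h.zig p (by omega)
      have z1 := h.zig (p - 1) (by omega)
      rw [show p - 1 + 1 = p by omega] at z1
      rcases Nat.lt_or_ge i (p - 1) with hh | hh
      · have n1 := h.nc (p - 2) p (by omega) (by omega) (by omega)
        rw [show p - 2 + 1 = p - 1 by omega] at n1
        have z2 := h.zig (p - 2) (by omega)
        rw [show p - 2 + 1 = p - 1 by omega] at z2
        have o1 := hout p le_rfl (p - 2) (by omega)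
        have i1 := h.inj (p - 2) (p + 1) (by omega) (by omega)
        have key : Bey p (x (p + 1)) (x (p - 2)) := by
          generalize x (p - 2) = u at *
          generalize x (p - 1) = u1 at *
          generalize x (p + 1) = u2 at *
          simp only [Bey, NCr] at *
          omega
        rcases Nat.lt_or_ge i (p - 2) with h4 | h4
        · have := hout (p - 2) (by omega) i h4
          simp only [Bey] at *
          omega
        · obtain rfl : i = p - 2 := by omega
          exact key
      · obtain rfl : i = p - 1 := by omega
        simp only [Bey] at *
        omega
    have b1 := hq i h1
    rcases Nat.lt_or_ge (p + 1) j with hh | hh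
    · have := hin' (p + 1) j (by omega) hh h3
      simp only [Bey] at *
      omega
    · obtain rfl : j = p + 1 := by omega
      exact b1
  refine ⟨p, hp1, hpa, ?_⟩
  intro i j hij hja
  unfold cl
  rcases Nat.lt_or_ge p j with h1 | h1
  · rcases Nat.lt_or_ge i p with h2 | h2
    · rw [show max (i + 1) (min p j) = p by omega]
      exact hmid i j h2 h1 hja
    · rw [show max (i + 1) (min p j) = i + 1 by omega]
      exact hin' i j h2 hij hja
  · rw [show max (i + 1) (min p j) = j by omega]
    exact hout j h1 i hij

/-- The pair of zigzags obtained from a folded strip by cutting at the middle face. -/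
structure Two (a : ℕ) (x w : ℕ → ℤ) : Prop where
  zx : Zig a x
  zw : Zig a w
  h0 : x 0 = - w 0
  inj : ∀ i j, i ≤ a → j ≤ a → 0 < i + j → x i ≠ - w j
  nx : ∀ i j, i < a → j < a → (i + j) % 2 = 1 →
    NCr (x i) (x (i + 1)) (- w j) (- w (j + 1))
  nw : ∀ i j, i < a → j < a → (i + j) % 2 = 1 →
    NCr (w i) (w (i + 1)) (- x j) (- x (j + 1))

theorem Two.symm {a : ℕ} {x w : ℕ → ℤ} (h : Two a x w) : Two a w x where
  zx := h.zw
  zw := h.zx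
  h0 := by have := h.h0; omega
  inj := fun i j hi hj hij e => h.inj j i hj hi (by omega) (by omega)
  nx := h.nw
  nw := h.nx

theorem Bey.flip {k : ℕ} {u v : ℤ} (h : Bey k u (- v)) : Bey k v (- u) := by
  simp only [Bey] at *; omega

theorem Bey.par {k l : ℕ} {u v : ℤ} (h : Bey k u v) (hk : k % 2 = l % 2) : Bey l u v := by
  simp only [Bey] at *; omega

theorem arm_step {a p q : ℕ} {x w : ℕ → ℤ} (h : Two a x w) (hpa : p ≤ a) (hqa : q ≤ a)
    (hx : OrdZ a p x) (m : ℕ) (hm : 1 ≤ m)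
    (ih : ∀ i j, i ≤ p → j ≤ q → max i j < m → 0 < i + j → Bey (max i j) (x i) (- w j))
    (hmp : m ≤ p) (j : ℕ) (hjq : j ≤ q) (hjm : j ≤ m) : Bey m (x m) (- w j) := by
  have h0 := h.h0
  rcases Nat.lt_or_ge 1 m with h1 | h1
  · have o1 : Bey m (x m) (x (m - 2)) := by
      have := hx (m - 2) m (by omega) (by omega)
      exact this.par (by unfold cl; omega)
    have o2 : Bey m (x m) (x (m - 1)) := by
      have := hx (m - 1) m (by omega) (by omega)
      exact this.par (by unfold cl; omega)
    have c1 : ∀ j, j ≤ m - 2 → j ≤ q → Bey m (x m) (- w j) := by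
      intro j hj hjq
      rcases Nat.eq_zero_or_pos (m - 2 + j) with h2 | h2
      · have e1 : j = 0 := by omega
        have e2 : m - 2 = 0 := by omega
        rw [e2] at o1
        rw [e1, ← h0]
        exact o1
      · have := (ih (m - 2) j (by omega) hjq (by omega) h2).par (l := m) (by omega)
        simp only [Bey] at *
        omega
    have c2 : m - 1 ≤ q → Bey m (x m) (- w (m - 1)) := by
      intro hq
      have n1 := h.nx (m - 1) (m - 2) (by omega) (by omega) (by omega)
      rw [show m - 1 + 1 = m by omega, show m - 2 + 1 = m - 1 by omega] at n1
      have d1 := c1 (m - 2) (by omega) (by omega)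
      have d2 := (ih (m - 1) (m - 2) (by omega) (by omega) (by omega) (by omega)).par
        (l := m - 1) (by omega)
      have i1 := h.inj m (m - 1) (by omega) (by omega) (by omega)
      simp only [Bey, NCr] at *
      omega
    rcases Nat.lt_or_ge j (m - 1) with h2 | h2
    · exact c1 j (by omega) hjq
    · rcases Nat.lt_or_ge j m with h3 | h3
      · obtain rfl : j = m - 1 := by omega
        exact c2 hjq
      · obtain rfl : j = m := by omega
        have d1 := c2 (by omega)
        have z := h.zw.zig (j - 1) (by omega)
        rw [show j - 1 + 1 = j by omega] at z
        simp only [Bey] at *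
        omega
  · obtain rfl : m = 1 := by omega
    have z1 : x 1 < x 0 := (h.zx.zig 0 (by omega)).1 rfl
    have z2 : w 1 < w 0 := (h.zw.zig 0 (by omega)).1 rfl
    refine ⟨by omega, fun _ => ?_⟩
    rcases Nat.lt_or_ge j 1 with h2 | h2
    · obtain rfl : j = 0 := by omega
      omega
    · obtain rfl : j = 1 := by omega
      omega

theorem arms {a p q : ℕ} {x w : ℕ → ℤ} (h : Two a x w) (hpa : p ≤ a) (hqa : q ≤ a)
    (hx : OrdZ a p x) (hw : OrdZ a q w) :
    ∀ m i j, i ≤ p → j ≤ q → max i j = m → 0 < i + j → Bey m (x i) (- w j) := by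
  intro m
  induction m using Nat.strong_induction_on with
  | _ m ih =>
    intro i j hi hj hm hij
    rcases Nat.lt_or_ge i j with h1 | h1
    · obtain rfl : j = m := by omega
      apply Bey.flip
      refine arm_step h.symm hqa hpa hw j (by omega) ?_ (by omega) i hi (by omega)
      intro i' j' h1' h2' h3' h4'
      exact (ih _ h3' j' i' h2' h1' (by omega) (by omega)).flip
    · obtain rfl : i = m := by omega
      refine arm_step h hpa hqa hx i (by omega) ?_ (by omega) j hj (by omega)
      intro i' j' h1' h2' h3' h4'
      exact (ih _ h3' i' j' h1' h2' rfl h4')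

theorem tail_arm {a p q : ℕ} {x w : ℕ → ℤ} (h : Two a x w) (hp1 : 1 ≤ p) (hqa : q ≤ a)
    (hx : OrdZ a p x) (hw : OrdZ a q w) (hpq : p ≤ q)
    (i j : ℕ) (hi : p < i) (hia : i ≤ a) (hj : j ≤ q) : Bey (max p j) (x i) (- w j) := by
  have hA := arms h (by omega) hqa hx hw
  have c1 : ∀ i j, p < i → i ≤ a → p ≤ j → j ≤ q → Bey j (x i) (- w j) := by
    intro i j hi hia h1 hj
    have o1 := (hx p i hi hia).par (l := p + 1) (by unfold cl; omega)
    have o2 := (hx (p - 1) i (by omega) hia).par (l := p) (by unfold cl; omega)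
    have d1 := hA j p j le_rfl hj (by omega) (by omega)
    have d2 := hA j (p - 1) j (by omega) hj (by omega) (by omega)
    simp only [Bey] at *
    omega
  rcases Nat.lt_or_ge j p with h1 | h1
  · apply Bey.par (k := p) _ (by omega)
    have c2 : Bey p (x (p + 1)) (- w (p - 1)) := by
      have n1 := h.nx p (p - 1) (by omega) (by omega) (by omega)
      rw [show p - 1 + 1 = p by omega] at n1
      have d1 := c1 (p + 1) p (by omega) (by omega) (by omega) (by omega)
      have d2 := hA p p p le_rfl (by omega) (by omega) (by omega)
      have d3 := hA p p (p - 1) le_rfl (by omega) (by omega) (by omega)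
      have i1 := h.inj (p + 1) (p - 1) (by omega) (by omega) (by omega)
      simp only [Bey, NCr] at *
      omega
    have c3 : Bey p (x i) (- w (p - 1)) := by
      rcases Nat.lt_or_ge (p + 1) i with h2 | h2
      · have := (hx (p + 1) i h2 hia).par (l := p) (by unfold cl; omega)
        simp only [Bey] at *
        omega
      · obtain rfl : i = p + 1 := by omega
        exact c2
    rcases Nat.lt_or_ge j (p - 1) with h2 | h2
    · have := (hw j (p - 1) h2 (by omega)).par (l := p - 1) (by unfold cl; omega)
      simp only [Bey] at *
      omega
    · obtain rfl : j = p - 1 := by omega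
      exact c3
  · exact (c1 i j hi hia h1 hj).par (by omega)

theorem tail_all {a p q : ℕ} {x w : ℕ → ℤ} (h : Two a x w) (hq1 : 1 ≤ q) (hqa : p ≤ a)
    (hx : OrdZ a p x) (hw : OrdZ a q w) (hpq : q + 2 ≤ p)
    (i j : ℕ) (hi : p < i) (hia : i ≤ a) (hj : j ≤ a) : Bey p (x i) (- w j) := by
  have hA := arms h (by omega) (by omega) hx hw
  have o1 := (hx (p - 2) i (by omega) hia).par (l := p) (by unfold cl; omega)
  rcases Nat.lt_or_ge q j with h1 | h1
  · have d1 := (hA (p - 2) (p - 2) q (by omega) le_rfl (by omega) (by omega)).par (l := p)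
      (by omega)
    have d2 := (hA (p - 2) (p - 2) (q - 1) (by omega) (by omega) (by omega) (by omega)).par
      (l := p) (by omega)
    have o2 := (hw q j h1 hj).par (l := q + 1) (by unfold cl; omega)
    have o3 := (hw (q - 1) j (by omega) hj).par (l := q) (by unfold cl; omega)
    simp only [Bey] at *
    omega
  · have d1 := (hA (p - 2) (p - 2) j (by omega) h1 (by omega) (by omega)).par (l := p)
      (by omega)
    simp only [Bey] at *
    omega

theorem nest_side {a p q : ℕ} {x w : ℕ → ℤ} (h : Two a x w) (hp1 : 1 ≤ p) (hqa : q ≤ a)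
    (hx : OrdZ a p x) (hw : OrdZ a q w) (hpq : q = p + 1)
    (i j : ℕ) (hi : i < p) (hj : j ≤ a) (hqj : q < j) : Bey q (x i) (- w j) := by
  have hA := arms h (by omega) (by omega) hx hw
  have o1 := (hw (q - 2) j (by omega) hj).par (l := q) (by unfold cl; omega)
  rcases Nat.eq_zero_or_pos (i + (q - 2)) with h1 | h1
  · have e1 : i = 0 := by omega
    have e2 : q - 2 = 0 := by omega
    have := h.h0
    rw [e2] at o1
    rw [e1]
    simp only [Bey] at *
    omega
  · have := (hA (q - 2) i (q - 2) (by omega) (by omega) (by omega) (by omega)).par (l := q)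
      (by omega)
    simp only [Bey] at *
    omega

theorem nest {a p q : ℕ} {x w : ℕ → ℤ} (h : Two a x w) (hp1 : 1 ≤ p) (hqa : q ≤ a)
    (hx : OrdZ a p x) (hw : OrdZ a q w) (hpq : q = p + 1) :
    ∃ K, q ≤ K ∧ K ≤ a ∧ ∀ i j, p ≤ i → i ≤ a → q ≤ j → j ≤ a →
      Bey (min i (min j K - 2)) (x i) (- w j) := by
  classical
  have hex : ∃ K, q ≤ K ∧ (K = a ∨ Bey K (x (K - 1)) (- w (K + 1))) := ⟨a, hqa, Or.inl rfl⟩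
  obtain ⟨K, ⟨hK1, hK⟩, hmin⟩ : ∃ K, (q ≤ K ∧ (K = a ∨ Bey K (x (K - 1)) (- w (K + 1)))) ∧
      ∀ m, m < K → ¬ (q ≤ m ∧ (m = a ∨ Bey m (x (m - 1)) (- w (m + 1)))) :=
    ⟨Nat.find hex, Nat.find_spec hex, fun m hm => Nat.find_min hex hm⟩
  have hKa : K ≤ a := by
    by_contra hc
    exact hmin a (by omega) ⟨hqa, Or.inl rfl⟩
  -- comparison with the first face of the other arm
  have base : ∀ i, p ≤ i → i ≤ a → Bey (min i (q - 2)) (x i) (- w q) := by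
    intro i hi hia
    rcases Nat.lt_or_ge p i with h1 | h1
    · exact (tail_arm h hp1 hqa hx hw (by omega) i q h1 hia le_rfl).par (by omega)
    · obtain rfl : i = p := by omega
      exact (arms h (by omega) hqa hx hw q i q le_rfl le_rfl (by omega) (by omega)).par (by omega)
  have pre : ∀ j, q ≤ j → j + 1 ≤ a →
      (∀ l, q ≤ l → l ≤ j → ∀ i, p ≤ i → i ≤ a → Bey (min i (l - 2)) (x i) (- w l)) →
      ∀ i, p ≤ i → i < j - 1 → Bey i (x i) (- w (j + 1)) := by
    intro j hqj hja ih i hpi hij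
    have z := h.zw.zig j (by omega)
    have b1 := (ih j hqj le_rfl i hpi (by omega)).par (l := i)
    rcases Nat.lt_or_ge i (j - 2) with h1 | h1
    · have b1 := b1 (by omega)
      have b2 := (ih (j - 1) (by omega) (by omega) i hpi (by omega)).par (l := i) (by omega)
      have o1 := (hw (j - 1) (j + 1) (by omega) (by omega)).par (l := j) (by unfold cl; omega)
      simp only [Bey] at *
      omega
    · have b1 := b1 (by omega)
      have c : Bey (j - 3) (x (j - 3)) (- w j) := by
        rcases Nat.lt_or_ge p i with h2 | h2
        · exact (ih j hqj le_rfl (j - 3) (by omega) (by omega)).par (by omega)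
        · exact (nest_side h hp1 hqa hx hw hpq (j - 3) j (by omega) (by omega) (by omega)).par
            (by omega)
      have n1 := h.nw j (j - 3) (by omega) (by omega) (by omega)
      rw [show j - 3 + 1 = i by omega] at n1
      have i1 := h.inj i (j + 1) (by omega) (by omega) (by omega)
      simp only [Bey, NCr] at *
      omega
  have main : ∀ j, q ≤ j → j ≤ K → ∀ i, p ≤ i → i ≤ a →
      Bey (min i (j - 2)) (x i) (- w j) := by
    intro j
    induction j using Nat.strong_induction_on with
    | _ j ih =>
      intro hqj hjK i hpi hia
      rcases Nat.lt_or_ge q j with h1 | h1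
      · obtain ⟨j, rfl⟩ : ∃ k, j = k + 1 := ⟨j - 1, by omega⟩
        have ih' : ∀ l, q ≤ l → l ≤ j → ∀ i, p ≤ i → i ≤ a →
            Bey (min i (l - 2)) (x i) (- w l) :=
          fun l h1 h2 => ih l (by omega) h1 (by omega)
        rcases Nat.lt_or_ge i (j - 1) with h2 | h2
        · exact (pre j (by omega) (by omega) ih' i hpi h2).par (by omega)
        · apply Bey.par (k := j - 1) _ (by omega)
          have nn : ¬ Bey j (x (j - 1)) (- w (j + 1)) := fun hc =>
            hmin j (by omega) ⟨by omega, Or.inr hc⟩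
          have i1 := h.inj (j - 1) (j + 1) (by omega) (by omega) (by omega)
          have n1 := h.nw j (j - 1) (by omega) (by omega) (by omega)
          rw [show j - 1 + 1 = j by omega] at n1
          have b1 := (ih' j (by omega) le_rfl (j - 1) (by omega) (by omega)).par (l := j) (by omega)
          have b2 := (ih' j (by omega) le_rfl j (by omega) (by omega)).par (l := j) (by omega)
          have z := h.zw.zig j (by omega)
          have z2 := h.zx.zig (j - 1) (by omega)
          rw [show j - 1 + 1 = j by omega] at z2
          have c1 : Bey (j - 1) (x (j - 1)) (- w (j + 1)) := by
            simp only [Bey] at *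
            omega
          have i2 := h.inj j (j + 1) (by omega) (by omega) (by omega)
          have c2 : Bey (j - 1) (x j) (- w (j + 1)) := by
            simp only [Bey, NCr] at *
            omega
          rcases Nat.lt_or_ge i j with h3 | h3
          · obtain rfl : i = j - 1 := by omega
            exact c1
          · rcases Nat.lt_or_ge j i with h4 | h4
            · have := (hx j i h4 hia).par (l := j + 1) (by unfold cl; omega)
              simp only [Bey] at *
              omega
            · obtain rfl : i = j := by omega
              exact c2
      · obtain rfl : j = q := by omega
        exact base i hpi hia
  refine ⟨K, hK1, hKa, ?_⟩
  intro i j hpi hia hqj hja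
  rcases Nat.lt_or_ge K j with h1 | h1
  · have hK := hK.resolve_left (by omega)
    have o1 := (hw K j h1 hja).par (l := K + 1) (by unfold cl; omega)
    have o2 : j = K + 1 ∨ Bey K (w j) (w (K + 1)) := by
      rcases Nat.lt_or_ge (K + 1) j with h2 | h2
      · exact Or.inr ((hw (K + 1) j h2 hja).par (by unfold cl; omega))
      · left; omega
    rcases Nat.lt_or_ge i (K - 1) with h2 | h2
    · have d1 := (main K hK1 le_rfl i hpi hia).par (l := i) (by omega)
      have d2 := pre K hK1 (by omega) (fun l h1 h2 => main l h1 h2) i hpi h2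
      apply Bey.par (k := i) _ (by omega)
      rcases o2 with rfl | o2
      · exact d2
      · simp only [Bey] at *
        omega
    · apply Bey.par (k := K) _ (by omega)
      have o3 : i = K - 1 ∨ Bey K (x i) (x (K - 1)) := by
        rcases Nat.lt_or_ge (K - 1) i with h2 | h2
        · exact Or.inr ((hx (K - 1) i h2 hia).par (by unfold cl; omega))
        · left; omega
      rcases o2 with rfl | o2 <;> rcases o3 with rfl | o3 <;> simp only [Bey] at * <;> omega
  · exact (main j hqj h1 i hpi hia).par (by omega)

/-- The number whose parity gives the comparison of `x i` with `- w j`. -/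
def cr (p q K i j : ℕ) : ℕ :=
  if q = p + 1 ∧ p ≤ i ∧ q ≤ j then min i (min j K - 2)
  else if p = q + 1 ∧ p ≤ i ∧ q ≤ j then min j (min i K - 2)
  else max (min i p) (min j q)

/-- The complete order described by the parameters. -/
structure OrdT (a p q K : ℕ) (x w : ℕ → ℤ) : Prop where
  ox : OrdZ a p x
  ow : OrdZ a q w
  oc : ∀ i j, i ≤ a → j ≤ a → 0 < i + j → Bey (cr p q K i j) (x i) (- w j)

/-- Admissible parameters. -/
def Adm (a p q K : ℕ) : Prop :=
  1 ≤ p ∧ p ≤ a ∧ 1 ≤ q ∧ q ≤ a ∧ max p q ≤ K ∧ K ≤ a ∧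
    (q = p + 1 ∨ p = q + 1 ∨ K = max p q)

theorem classify_le {a p q : ℕ} {x w : ℕ → ℤ} (h : Two a x w) (hp1 : 1 ≤ p) (hqa : q ≤ a)
    (hx : OrdZ a p x) (hw : OrdZ a q w) (hpq : p ≤ q) :
    ∃ K, Adm a p q K ∧ OrdT a p q K x w := by
  have hA := arms h (by omega) hqa hx hw
  have hT := tail_arm h hp1 hqa hx hw hpq
  by_cases hn : q = p + 1
  · obtain ⟨K, hK1, hK2, hK⟩ := nest h hp1 hqa hx hw hn
    refine ⟨K, ⟨hp1, by omega, by omega, hqa, by omega, hK2, Or.inl hn⟩, hx, hw, ?_⟩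
    intro i j hi hj hij
    by_cases c1 : p ≤ i ∧ q ≤ j
    · refine (hK i j c1.1 hi c1.2 hj).par ?_
      rw [cr, if_pos ⟨hn, c1⟩]
    · have e : cr p q K i j = max (min i p) (min j q) := by
        rw [cr, if_neg (by omega), if_neg (by omega)]
      rw [e]
      rcases Nat.lt_or_ge q j with h1 | h1
      · exact (nest_side h hp1 hqa hx hw hn i j (by omega) hj h1).par (by omega)
      · rcases Nat.lt_or_ge p i with h2 | h2
        · exact (hT i j h2 hi h1).par (by omega)
        · exact (hA _ i j h2 h1 rfl hij).par (by omega)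
  · refine ⟨max p q, ⟨hp1, by omega, by omega, hqa, by omega, by omega, by omega⟩, hx, hw, ?_⟩
    intro i j hi hj hij
    have e : cr p q (max p q) i j = max (min i p) (min j q) := by
      rw [cr, if_neg (by omega), if_neg (by omega)]
    rw [e]
    rcases Nat.lt_or_ge q j with h1 | h1
    · by_cases h3 : p = q
      · subst h3
        have t1 : ∀ i, i ≤ p → Bey p (x i) (- w j) := fun i hi =>
          (tail_arm h.symm hp1 hqa hw hx hpq j i h1 hj hi).flip.par (by omega)
        rcases Nat.lt_or_ge p i with h2 | h2
        · have t2 := t1 (p - 1) (by omega)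
          have o1 := (hx (p - 1) i (by omega) hi).par (l := p) (by unfold cl; omega)
          apply Bey.par (k := p) _ (by omega)
          simp only [Bey] at *
          omega
        · exact (t1 i h2).par (by omega)
      · exact (tail_all h.symm hp1 hqa hw hx (by omega) j i h1 hj hi).flip.par (by omega)
    · rcases Nat.lt_or_ge p i with h2 | h2
      · exact (hT i j h2 hi h1).par (by omega)
      · exact (hA _ i j h2 h1 rfl hij).par (by omega)

theorem OrdT.swap {a p q K : ℕ} {x w : ℕ → ℤ} (h : OrdT a p q K x w) : OrdT a q p K w x where
  ox := h.ow
  ow := h.ox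
  oc := fun i j hi hj hij => (h.oc j i hj hi (by omega)).flip.par (by unfold cr; grind)

theorem classify {a : ℕ} {x w : ℕ → ℤ} (h : Two a x w) (ha : 1 ≤ a) :
    ∃ p q K, Adm a p q K ∧ OrdT a p q K x w := by
  obtain ⟨p, hp1, hpa, hx⟩ := zig_exists h.zx ha
  obtain ⟨q, hq1, hqa, hw⟩ := zig_exists h.zw ha
  rcases Nat.le_total p q with hpq | hpq
  · obtain ⟨K, h1, h2⟩ := classify_le h hp1 hqa hx hw hpq
    exact ⟨p, q, K, h1, h2⟩
  · obtain ⟨K, h1, h2⟩ := classify_le h.symm hq1 hpa hw hx hpq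
    refine ⟨p, q, K, ?_, h2.swap⟩
    unfold Adm at *
    omega

theorem ordZ_zig {a p : ℕ} {x : ℕ → ℤ} (h : OrdZ a p x) : Zig a x where
  inj := by
    intro i j hij hj e
    have := h i j hij hj
    simp only [Bey] at this
    omega
  zig := by
    intro i hi
    have := (h i (i + 1) (by omega) hi).par (l := i + 1) (by unfold cl; omega)
    simp only [Bey] at *
    omega
  nc := by
    have key : ∀ i j, i + 2 ≤ j → j < a → i % 2 = j % 2 →
        NCr (x i) (x (i + 1)) (x j) (x (j + 1)) ∧ NCr (x j) (x (j + 1)) (x i) (x (i + 1)) := by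
      intro i j hij hja hpar
      have h1 := h i (i + 1) (by omega) (by omega)
      have h2 := h j (j + 1) (by omega) (by omega)
      have h3 := h i j (by omega) (by omega)
      have h4 := h i (j + 1) (by omega) (by omega)
      have h5 := h (i + 1) j (by omega) (by omega)
      have h6 := h (i + 1) (j + 1) (by omega) (by omega)
      generalize x i = u at *
      generalize x (i + 1) = u' at *
      generalize x j = v at *
      generalize x (j + 1) = v' at *
      simp only [Bey, NCr, cl] at *
      rcases Nat.lt_or_ge p (i + 1) with c1 | c1
      · rw [show max (i + 1) (min p (i + 1)) = i + 1 by omega] at h1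
        rw [show max (j + 1) (min p (j + 1)) = j + 1 by omega] at h2
        rw [show max (i + 1) (min p j) = i + 1 by omega] at h3
        rw [show max (i + 1) (min p (j + 1)) = i + 1 by omega] at h4
        rw [show max (i + 1 + 1) (min p j) = i + 2 by omega] at h5
        rw [show max (i + 1 + 1) (min p (j + 1)) = i + 2 by omega] at h6
        omega
      rcases Nat.lt_or_ge j p with c2 | c2
      · rw [show max (i + 1) (min p (i + 1)) = i + 1 by omega] at h1
        rw [show max (j + 1) (min p (j + 1)) = j + 1 by omega] at h2
        rw [show max (i + 1) (min p j) = j by omega] at h3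
        rw [show max (i + 1) (min p (j + 1)) = j + 1 by omega] at h4
        rw [show max (i + 1 + 1) (min p j) = j by omega] at h5
        rw [show max (i + 1 + 1) (min p (j + 1)) = j + 1 by omega] at h6
        omega
      rcases Nat.lt_or_ge p (i + 2) with c3 | c3
      · rw [show max (i + 1) (min p (i + 1)) = i + 1 by omega] at h1
        rw [show max (j + 1) (min p (j + 1)) = j + 1 by omega] at h2
        rw [show max (i + 1) (min p j) = i + 1 by omega] at h3
        rw [show max (i + 1) (min p (j + 1)) = i + 1 by omega] at h4
        rw [show max (i + 1 + 1) (min p j) = i + 2 by omega] at h5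
        rw [show max (i + 1 + 1) (min p (j + 1)) = i + 2 by omega] at h6
        omega
      · rw [show max (i + 1) (min p (i + 1)) = i + 1 by omega] at h1
        rw [show max (j + 1) (min p (j + 1)) = j + 1 by omega] at h2
        rw [show max (i + 1) (min p j) = p by omega] at h3
        rw [show max (i + 1) (min p (j + 1)) = p by omega] at h4
        rw [show max (i + 1 + 1) (min p j) = p by omega] at h5
        rw [show max (i + 1 + 1) (min p (j + 1)) = p by omega] at h6
        omega
    intro i j hi hj hpar
    rcases Nat.lt_trichotomy i j with c | c | c
    · exact (key i j (by omega) hj hpar).1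
    · subst c
      simp only [NCr]
      omega
    · exact (key j i (by omega) hi hpar.symm).2

theorem cr_far {p q K i j : ℕ} (h : ¬ (p ≤ i ∧ q ≤ j)) :
    cr p q K i j = max (min i p) (min j q) := by
  rw [cr, if_neg (by tauto), if_neg (by tauto)]

theorem cr_plain {p q K i j : ℕ} (h1 : q ≠ p + 1) (h2 : p ≠ q + 1) :
    cr p q K i j = max (min i p) (min j q) := by
  rw [cr, if_neg (by tauto), if_neg (by tauto)]

theorem cr_near {p q K i j : ℕ} (h : q = p + 1) (h1 : p ≤ i) (h2 : q ≤ j) :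
    cr p q K i j = min i (min j K - 2) := by
  rw [cr, if_pos ⟨h, h1, h2⟩]

theorem cr_swap (p q K i j : ℕ) : cr p q K i j = cr q p K j i := by
  unfold cr; grind

/-- Two of the four comparisons between neighbouring creases agree. -/
def CrPar (p q K i j : ℕ) : Prop :=
  ((cr p q K i j) % 2 = (cr p q K (i + 1) j) % 2 ∧
      (cr p q K i (j + 1)) % 2 = (cr p q K (i + 1) (j + 1)) % 2) ∨
      ((cr p q K i j) % 2 = (cr p q K i (j + 1)) % 2 ∧
      (cr p q K (i + 1) j) % 2 = (cr p q K (i + 1) (j + 1)) % 2)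

theorem max_par {p q i j : ℕ} (hij : (i + j) % 2 = 1) :
    (max (min i p) (min j q) = max (min (i + 1) p) (min j q) ∧
      max (min i p) (min (j + 1) q) = max (min (i + 1) p) (min (j + 1) q)) ∨
    (max (min i p) (min j q) = max (min i p) (min (j + 1) q) ∧
      max (min (i + 1) p) (min j q) = max (min (i + 1) p) (min (j + 1) q)) := by
  rcases Nat.lt_or_ge i p with h1 | h1
  · rcases Nat.lt_or_ge j q with h2 | h2
    · rw [Nat.min_eq_left (by omega : i ≤ p), Nat.min_eq_left (by omega : j ≤ q),
        Nat.min_eq_left (by omega : i + 1 ≤ p), Nat.min_eq_left (by omega : j + 1 ≤ q)]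
      omega
    · rw [Nat.min_eq_right (by omega : q ≤ j), Nat.min_eq_right (by omega : q ≤ j + 1)]
      exact Or.inr ⟨rfl, rfl⟩
  · rw [Nat.min_eq_right (by omega : p ≤ i), Nat.min_eq_right (by omega : p ≤ i + 1)]
    exact Or.inl ⟨rfl, rfl⟩

theorem cr_par_near {p q K i j : ℕ} (hK : max p q ≤ K) (hp1 : 1 ≤ p)
    (hij : (i + j) % 2 = 1) (hn : q = p + 1) : CrPar p q K i j := by
  unfold CrPar
  rcases Nat.lt_or_ge (i + 1) p with h1 | h1
  · rw [cr_far (by omega), cr_far (by omega), cr_far (by omega), cr_far (by omega)]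
    have := max_par (p := p) (q := q) hij
    omega
  rcases Nat.lt_or_ge (j + 1) q with h2 | h2
  · rw [cr_far (by omega), cr_far (by omega), cr_far (by omega), cr_far (by omega)]
    have := max_par (p := p) (q := q) hij
    omega
  rcases Nat.lt_or_ge i p with h3 | h3
  · rcases Nat.lt_or_ge j q with h4 | h4
    · rw [cr_far (by omega), cr_far (by omega), cr_far (by omega), cr_near hn h1 h2]
      omega
    · rw [cr_far (by omega), cr_near hn h1 h4, cr_far (by omega), cr_near hn h1 h2]
      rw [show i + 1 = p by omega, show min j q = q by omega, show min (j + 1) q = q by omega]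
      omega
  · rcases Nat.lt_or_ge j q with h4 | h4
    · rw [cr_far (by omega), cr_far (by omega), cr_near hn h3 h2, cr_near hn h1 h2]
      omega
    · rw [cr_near hn h3 h4, cr_near hn h1 h4, cr_near hn h3 h2, cr_near hn h1 h2]
      rcases Nat.lt_or_ge j K with h5 | h5
      · rw [show min j K = j by omega, show min (j + 1) K = j + 1 by omega]
        omega
      · rw [show min j K = K by omega, show min (j + 1) K = K by omega]
        omega

theorem cr_par {p q K i j : ℕ} (hp1 : 1 ≤ p) (hq1 : 1 ≤ q) (hK : max p q ≤ K)
    (hij : (i + j) % 2 = 1) : CrPar p q K i j := by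
  by_cases h1 : q = p + 1
  · exact cr_par_near hK hp1 hij h1
  by_cases h2 : p = q + 1
  · have := cr_par_near (p := q) (q := p) (K := K) (i := j) (j := i) (by omega) hq1 (by omega) h2
    unfold CrPar at *
    simp only [cr_swap p q]
    tauto
  · unfold CrPar
    simp only [cr_plain h1 h2]
    have := max_par (p := p) (q := q) hij
    omega

theorem cross_nc {p q K i j : ℕ} {u u' v v' : ℤ}
    (hp1 : 1 ≤ p) (hq1 : 1 ≤ q) (hK : max p q ≤ K) (hij : (i + j) % 2 = 1)
    (z1 : Bey i u u') (z2 : Bey (j + 1) v v')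
    (h1 : Bey (cr p q K i j) u v) (h2 : Bey (cr p q K i (j + 1)) u v')
    (h3 : Bey (cr p q K (i + 1) j) u' v) (h4 : Bey (cr p q K (i + 1) (j + 1)) u' v') :
    NCr u u' v v' ∧ NCr v v' u u' := by
  have key := cr_par hp1 hq1 hK hij
  unfold CrPar at key
  generalize cr p q K i j = c1 at *
  generalize cr p q K i (j + 1) = c2 at *
  generalize cr p q K (i + 1) j = c3 at *
  generalize cr p q K (i + 1) (j + 1) = c4 at *
  simp only [Bey, NCr] at *
  omega

theorem ordT_two {a p q K : ℕ} {x w : ℕ → ℤ} (hT : Adm a p q K) (h : OrdT a p q K x w)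
    (h0 : x 0 = - w 0) : Two a x w := by
  have zx := ordZ_zig h.ox
  have zw := ordZ_zig h.ow
  have key : ∀ i j, i < a → j < a → (i + j) % 2 = 1 →
      NCr (x i) (x (i + 1)) (- w j) (- w (j + 1)) ∧
      NCr (- w j) (- w (j + 1)) (x i) (x (i + 1)) := by
    intro i j hi hj hij
    refine cross_nc (p := p) (q := q) (K := K) (i := i) (j := j) hT.1 hT.2.2.1 hT.2.2.2.2.1 hij
      (zx.zig i hi) ?_ (h.oc _ _ (by omega) (by omega) (by omega))
      (h.oc _ _ (by omega) (by omega) (by omega)) (h.oc _ _ (by omega) (by omega) (by omega))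
      (h.oc _ _ (by omega) (by omega) (by omega))
    have := zw.zig j hj
    simp only [Bey] at *
    omega
  refine ⟨zx, zw, h0, ?_, fun i j hi hj hij => (key i j hi hj hij).1, ?_⟩
  · intro i j hi hj hij e
    have := h.oc i j hi hj hij
    simp only [Bey] at this
    omega
  · intro i j hi hj hij
    have := (key j i hj hi (by omega)).2
    simp only [NCr] at *
    omega

theorem adm_unique {a p q K p' q' K' : ℕ} {x w : ℕ → ℤ} (hT : Adm a p q K) (hT' : Adm a p' q' K')
    (h : OrdT a p q K x w) (h' : OrdT a p' q' K' x w) : p = p' ∧ q = q' ∧ K = K' := by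
  have hz : ∀ (x : ℕ → ℤ) p p', 1 ≤ p → p' ≤ a → OrdZ a p x → OrdZ a p' x → ¬ p < p' := by
    intro x p p' h1 h2 h3 h4 hlt
    have a1 := (h3 (p - 1) (p + 1) (by omega) (by omega)).par (l := p) (by unfold cl; omega)
    have a2 := (h4 (p - 1) (p + 1) (by omega) (by omega)).par (l := p + 1) (by unfold cl; omega)
    simp only [Bey] at *
    omega
  obtain ⟨t1, t2, t3, t4, t5, t6, t7⟩ := hT
  obtain ⟨s1, s2, s3, s4, s5, s6, s7⟩ := hT'
  have e1 : p = p' := by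
    have := hz x p p' t1 s2 h.ox h'.ox
    have := hz x p' p s1 t2 h'.ox h.ox
    omega
  have e2 : q = q' := by
    have := hz w q q' t3 s4 h.ow h'.ow
    have := hz w q' q s3 t4 h'.ow h.ow
    omega
  subst e1 e2
  have hk : ∀ K K', max p q ≤ K → K' ≤ a → (q = p + 1 ∨ p = q + 1) → OrdT a p q K x w →
      OrdT a p q K' x w → ¬ K < K' := by
    intro K K' k1 k2 k3 o1 o2 hlt
    rcases k3 with k3 | k3
    · have a1 := (o1.oc (K - 1) (K + 1) (by omega) (by omega) (by omega)).par (l := K)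
        (by unfold cr; split_ifs <;> omega)
      have a2 := (o2.oc (K - 1) (K + 1) (by omega) (by omega) (by omega)).par (l := K + 1)
        (by unfold cr; split_ifs <;> omega)
      simp only [Bey] at *
      omega
    · have a1 := (o1.oc (K + 1) (K - 1) (by omega) (by omega) (by omega)).par (l := K)
        (by unfold cr; split_ifs <;> omega)
      have a2 := (o2.oc (K + 1) (K - 1) (by omega) (by omega) (by omega)).par (l := K + 1)
        (by unfold cr; split_ifs <;> omega)
      simp only [Bey] at *
      omega
  refine ⟨rfl, rfl, ?_⟩
  by_cases hc : q = p + 1 ∨ p = q + 1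
  · have := hk K K' t5 s6 hc h h'
    have := hk K' K s5 t6 hc h' h
    omega
  · omega

/-- The number whose parity gives the comparison of the faces `u < v`. -/
def ev (a p q K u v : ℕ) : ℕ :=
  if v ≤ a then cl (a - v + 1) p (a - u)
  else if u ≤ a then cr p q K (a - u) (v - a)
  else cl (u - a + 1) q (v - a)

theorem cl_tri {p i j k : ℕ} (h1 : i < j) (h2 : j < k) :
    cl (i + 1) p k = cl (j + 1) p k ∨ cl (i + 1) p k = cl (i + 1) p j := by
  unfold cl; omega

theorem cr_tri {p q K j k l : ℕ} (hp1 : 1 ≤ p) (hq1 : 1 ≤ q) (hK : max p q ≤ K) (hjk : j < k)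
    (h : cl (j + 1) p k % 2 = cr p q K j l % 2) : cr p q K k l % 2 = cr p q K j l % 2 := by
  by_cases hf : q ≤ l
  swap
  · rw [cr_far (by omega), cr_far (by omega)] at *
    unfold cl at h
    generalize min l q = m at *
    omega
  by_cases h1 : q = p + 1
  · rcases Nat.lt_or_ge k p with c1 | c1
    · rw [cr_far (by omega), cr_far (by omega)] at *
      unfold cl at h
      generalize min l q = m at *
      omega
    · rcases Nat.lt_or_ge j p with c2 | c2
      · rw [cr_far (i := j) (by omega)] at *
        unfold cl at h
        omega
      · rw [cr_near h1 c1 hf]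
        rw [cr_near h1 c2 hf] at *
        unfold cl at h
        generalize min l K - 2 = m at *
        omega
  by_cases h2 : p = q + 1
  · rw [cr_swap p q] at *
    rw [cr_swap p q]
    rcases Nat.lt_or_ge k p with c1 | c1
    · rw [cr_far (by omega), cr_far (by omega)] at *
      unfold cl at h
      generalize min l q = m at *
      omega
    · rcases Nat.lt_or_ge j p with c2 | c2
      · rw [cr_far (j := j) (by omega)] at *
        unfold cl at h
        omega
      · rw [cr_near h2 hf c1]
        rw [cr_near h2 hf c2] at *
        unfold cl at h
        omega
  rw [cr_plain h1 h2] at *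
  rw [cr_plain h1 h2]
  unfold cl at h
  generalize min l q = m at *
  omega

theorem ev_tri {a p q K u v w : ℕ} (hT : Adm a p q K) (huv : u < v) (hvw : v < w)
    (h : ev a p q K u v % 2 = ev a p q K v w % 2) :
    ev a p q K u w % 2 = ev a p q K u v % 2 := by
  obtain ⟨t1, t2, t3, t4, t5, t6, t7⟩ := hT
  unfold ev at *
  rcases Nat.lt_or_ge a w with c1 | c1
  · rw [if_neg (by omega : ¬ w ≤ a)] at *
    rcases Nat.lt_or_ge a v with c2 | c2
    · rw [if_neg (by omega : ¬ v ≤ a), if_neg (by omega : ¬ v ≤ a)] at *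
      rcases Nat.lt_or_ge a u with c3 | c3
      · rw [if_neg (by omega : ¬ u ≤ a)] at *
        rw [if_neg (by omega : ¬ u ≤ a)]
        have := cl_tri (p := q) (i := u - a) (j := v - a) (k := w - a) (by omega) (by omega)
        omega
      · rw [if_pos c3] at *
        rw [if_pos c3]
        have := cr_tri (p := q) (q := p) (K := K) (j := v - a) (k := w - a) (l := a - u) t3 t1
          (by omega) (by omega)
        rw [cr_swap q p K (w - a) (a - u), cr_swap q p K (v - a) (a - u)] at this
        exact this h.symm
    · rw [if_pos c2, if_pos c2] at h
      rw [if_pos c2, if_pos (by omega)]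
      have := cr_tri (p := p) (q := q) (K := K) (j := a - v) (k := a - u) (l := w - a) t1 t3
        t5 (by omega) h
      omega
  · rw [if_pos c1, if_pos (by omega)] at *
    have := cl_tri (p := p) (i := a - w) (j := a - v) (k := a - u) (by omega) (by omega)
    omega

theorem exists_perm {n : ℕ} (R : Fin n → Fin n → Prop) (irr : ∀ u, ¬ R u u)
    (tr : ∀ u v w, R u v → R v w → R u w) (tot : ∀ u v, u ≠ v → R u v ∨ R v u) :
    ∃ σ : Equiv.Perm (Fin n), ∀ u v, σ u < σ v ↔ R u v := by
  classical
  let f : Fin n → ℕ := fun u => (Finset.univ.filter (fun w => R w u)).card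
  have mono : ∀ u v, R u v → f u < f v := by
    intro u v h
    apply Finset.card_lt_card
    refine ⟨?_, ?_⟩
    · intro w hw
      simp only [Finset.mem_filter, Finset.mem_univ, true_and] at *
      exact tr w u v hw h
    · intro hs
      have : u ∈ Finset.univ.filter (fun w => R w u) := hs (by simpa using h)
      simp only [Finset.mem_filter, Finset.mem_univ, true_and] at this
      exact irr u this
  have lt : ∀ u, f u < n := by
    intro u
    have : f u < (Finset.univ : Finset (Fin n)).card := by
      apply Finset.card_lt_card
      refine ⟨Finset.subset_univ _, ?_⟩
      intro hs
      have : u ∈ Finset.univ.filter (fun w => R w u) := hs (Finset.mem_univ u)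
      simp only [Finset.mem_filter, Finset.mem_univ, true_and] at this
      exact irr u this
    simpa using this
  let g : Fin n → Fin n := fun u => ⟨f u, lt u⟩
  have inj : Function.Injective g := by
    intro u v h
    by_contra hne
    have h' : f u = f v := congrArg Fin.val h
    rcases tot u v hne with h1 | h1
    · have := mono _ _ h1; omega
    · have := mono _ _ h1; omega
  refine ⟨Equiv.ofBijective g (Finite.injective_iff_bijective.mp inj), ?_⟩
  intro u v
  show f u < f v ↔ R u v
  constructor
  · intro h
    by_contra hc
    by_cases hne : u = v
    · subst hne; omega
    · rcases tot u v hne with h1 | h1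
      · exact hc h1
      · have := mono _ _ h1; omega
  · exact mono u v

theorem perm_unique {n : ℕ} (σ τ : Equiv.Perm (Fin n)) (h : ∀ u v, σ u < σ v ↔ τ u < τ v) :
    σ = τ := by
  have e : StrictMono (fun i => τ (σ.symm i)) := by
    intro i j hij
    rw [← h]
    simpa using hij
  let o : Fin n ≃o Fin n :=
    StrictMono.orderIsoOfSurjective _ e (τ.surjective.comp σ.symm.surjective)
  have ho : o = OrderIso.refl _ := Subsingleton.elim _ _
  ext u
  have : o (σ u) = σ u := by rw [ho]; rfl
  have h2 : o (σ u) = τ (σ.symm (σ u)) := rfl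
  rw [h2] at this
  simp at this
  rw [this]

/-- First arm of a layer ordering. -/
def ax (a : ℕ) (g : ℕ → ℤ) (i : ℕ) : ℤ := if a % 2 = 0 then g (a - i) else - g (a - i)

/-- Second arm of a layer ordering, negated. -/
def aw (a : ℕ) (g : ℕ → ℤ) (j : ℕ) : ℤ := if a % 2 = 0 then - g (a + j) else g (a + j)

/-- Layer orderings in terms of the function `g`. -/
structure Lay (a : ℕ) (g : ℕ → ℤ) : Prop where
  m : ∀ i, i < a → Bey i (g i) (g (i + 1))
  v : ∀ i, a ≤ i → i < 2 * a → Bey i (g (i + 1)) (g i)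
  nc : ∀ i j, i < 2 * a → j < 2 * a → i % 2 = j % 2 → NCr (g i) (g (i + 1)) (g j) (g (j + 1))

theorem NCr.neg {a b c d : ℤ} (h : NCr a b c d) : NCr (-a) (-b) (-c) (-d) := by
  unfold NCr at *; omega

theorem NCr.swapl {a b c d : ℤ} (h : NCr a b c d) : NCr b a c d := by
  unfold NCr at *; omega

theorem NCr.swapr {a b c d : ℤ} (h : NCr a b c d) : NCr a b d c := by
  unfold NCr at *; omega

theorem lay_two {a : ℕ} {g : ℕ → ℤ} (inj : ∀ u v, u < v → v ≤ 2 * a → g u ≠ g v)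
    (h : Lay a g) : Two a (ax a g) (aw a g) := by
  have e : ∀ i, i < a → a - i = a - (i + 1) + 1 := fun i hi => by omega
  have e' : ∀ i, a + (i + 1) = a + i + 1 := fun i => by omega
  have nxx : ∀ i j, i < a → j < a → i % 2 = j % 2 →
      NCr (g (a - i)) (g (a - (i + 1))) (g (a - j)) (g (a - (j + 1))) := by
    intro i j hi hj hij
    have := h.nc (a - (i + 1)) (a - (j + 1)) (by omega) (by omega) (by omega)
    rw [← e i hi, ← e j hj] at this
    exact this.swapl.swapr
  have nww : ∀ i j, i < a → j < a → i % 2 = j % 2 →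
      NCr (g (a + i)) (g (a + (i + 1))) (g (a + j)) (g (a + (j + 1))) := by
    intro i j hi hj hij
    exact h.nc (a + i) (a + j) (by omega) (by omega) (by omega)
  have nxw : ∀ i j, i < a → j < a → (i + j) % 2 = 1 →
      NCr (g (a - i)) (g (a - (i + 1))) (g (a + j)) (g (a + (j + 1))) := by
    intro i j hi hj hij
    have := h.nc (a - (i + 1)) (a + j) (by omega) (by omega) (by omega)
    rw [← e i hi] at this
    exact this.swapl
  have nwx : ∀ i j, i < a → j < a → (i + j) % 2 = 1 →
      NCr (g (a + i)) (g (a + (i + 1))) (g (a - j)) (g (a - (j + 1))) := by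
    intro i j hi hj hij
    have := h.nc (a + i) (a - (j + 1)) (by omega) (by omega) (by omega)
    rw [← e j hj] at this
    exact this.swapr
  have z1 : ∀ i, i < a → Bey (a + i) (g (a - i)) (g (a - (i + 1))) := by
    intro i hi
    have := h.m (a - (i + 1)) (by omega)
    rw [← e i hi] at this
    simp only [Bey] at *
    omega
  have z2 : ∀ i, i < a → Bey (a + i) (g (a + (i + 1))) (g (a + i)) := 
    fun i hi => h.v (a + i) (by omega) (by omega)
  rcases Nat.mod_two_eq_zero_or_one a with ha | ha
  · have ex : ax a g = fun i => g (a - i) := by funext i; simp [ax, ha]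
    have ew : aw a g = fun i => - g (a + i) := by funext i; simp [aw, ha]
    rw [ex, ew]
    refine ⟨⟨?_, ?_, nxx⟩, ⟨?_, ?_, fun i j hi hj hij => (nww i j hi hj hij).neg⟩, ?_, ?_, ?_, ?_⟩
    · exact fun i j hij hj => (inj _ _ (by omega) (by omega)).symm
    · exact fun i hi => (z1 i hi).par (by omega)
    · exact fun i j hij hj => by have := inj (a + i) (a + j) (by omega) (by omega); simpa using this
    · intro i hi
      have := z2 i hi
      simp only [Bey] at *
      omega
    · simp
    · intro i j hi hj hij
      have := inj (a - i) (a + j) (by omega) (by omega)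
      simpa using this
    · intro i j hi hj hij
      simpa using nxw i j hi hj hij
    · intro i j hi hj hij
      exact (nwx i j hi hj hij).neg
  · have ex : ax a g = fun i => - g (a - i) := by funext i; simp [ax, ha]
    have ew : aw a g = fun i => g (a + i) := by funext i; simp [aw, ha]
    rw [ex, ew]
    refine ⟨⟨?_, ?_, fun i j hi hj hij => (nxx i j hi hj hij).neg⟩, ⟨?_, ?_, nww⟩, ?_, ?_, ?_, ?_⟩
    · exact fun i j hij hj => by
        have := (inj (a - j) (a - i) (by omega) (by omega)).symm; simpa using this
    · intro i hi
      have := z1 i hi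
      simp only [Bey] at *
      omega
    · exact fun i j hij hj => inj (a + i) (a + j) (by omega) (by omega)
    · intro i hi
      have := z2 i hi
      simp only [Bey] at *
      omega
    · simp
    · intro i j hi hj hij
      have := inj (a - i) (a + j) (by omega) (by omega)
      simpa using this
    · intro i j hi hj hij
      exact (nxw i j hi hj hij).neg
    · intro i j hi hj hij
      simpa using nwx i j hi hj hij

theorem two_lay {a : ℕ} {g : ℕ → ℤ} (h : Two a (ax a g) (aw a g)) : Lay a g := by
  have facts : (∀ i, i < a → Bey (a + i) (g (a - i)) (g (a - (i + 1)))) ∧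
      (∀ i, i < a → Bey (a + i) (g (a + (i + 1))) (g (a + i))) ∧
      (∀ i j, i < a → j < a → i % 2 = j % 2 →
        NCr (g (a - i)) (g (a - (i + 1))) (g (a - j)) (g (a - (j + 1)))) ∧
      (∀ i j, i < a → j < a → i % 2 = j % 2 →
        NCr (g (a + i)) (g (a + (i + 1))) (g (a + j)) (g (a + (j + 1)))) ∧
      (∀ i j, i < a → j < a → (i + j) % 2 = 1 →
        NCr (g (a - i)) (g (a - (i + 1))) (g (a + j)) (g (a + (j + 1)))) ∧
      (∀ i j, i < a → j < a → (i + j) % 2 = 1 →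
        NCr (g (a + i)) (g (a + (i + 1))) (g (a - j)) (g (a - (j + 1)))) := by
    rcases Nat.mod_two_eq_zero_or_one a with ha | ha
    · have ex : ax a g = fun i => g (a - i) := by funext i; simp [ax, ha]
      have ew : aw a g = fun i => - g (a + i) := by funext i; simp [aw, ha]
      rw [ex, ew] at h
      refine ⟨?_, ?_, h.zx.nc, ?_, ?_, ?_⟩
      · exact fun i hi => (h.zx.zig i hi).par (by omega)
      · intro i hi
        have := h.zw.zig i hi
        simp only [Bey] at *
        omega
      · intro i j hi hj hij
        simpa using (h.zw.nc i j hi hj hij).neg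
      · intro i j hi hj hij
        simpa using h.nx i j hi hj hij
      · intro i j hi hj hij
        simpa using (h.nw i j hi hj hij).neg
    · have ex : ax a g = fun i => - g (a - i) := by funext i; simp [ax, ha]
      have ew : aw a g = fun i => g (a + i) := by funext i; simp [aw, ha]
      rw [ex, ew] at h
      refine ⟨?_, ?_, ?_, h.zw.nc, ?_, ?_⟩
      · intro i hi
        have := h.zx.zig i hi
        simp only [Bey] at *
        omega
      · intro i hi
        have := h.zw.zig i hi
        simp only [Bey] at *
        omega
      · intro i j hi hj hij
        simpa using (h.zx.nc i j hi hj hij).neg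
      · intro i j hi hj hij
        simpa using (h.nx i j hi hj hij).neg
      · intro i j hi hj hij
        simpa using h.nw i j hi hj hij
  obtain ⟨f1, f2, f3, f4, f5, f6⟩ := facts
  have ea : ∀ i, i < a → a - (a - 1 - i) = i + 1 ∧ a - (a - 1 - i + 1) = i := fun i hi => by omega
  have eb : ∀ i, a ≤ i → a + (i - a) = i ∧ a + (i - a + 1) = i + 1 := fun i hi => by omega
  refine ⟨?_, ?_, ?_⟩
  · intro i hi
    have := f1 (a - 1 - i) (by omega)
    rw [(ea i hi).1, (ea i hi).2] at this
    simp only [Bey] at *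
    omega
  · intro i hi hi2
    have := f2 (i - a) (by omega)
    rw [(eb i hi).1, (eb i hi).2] at this
    exact this.par (by omega)
  · intro i j hi hj hij
    rcases Nat.lt_or_ge i a with c1 | c1 <;> rcases Nat.lt_or_ge j a with c2 | c2
    · have := f3 (a - 1 - i) (a - 1 - j) (by omega) (by omega) (by omega)
      rw [(ea i c1).1, (ea i c1).2, (ea j c2).1, (ea j c2).2] at this
      exact this.swapl.swapr
    · have := f5 (a - 1 - i) (j - a) (by omega) (by omega) (by omega)
      rw [(ea i c1).1, (ea i c1).2, (eb j c2).1, (eb j c2).2] at this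
      exact this.swapl
    · have := f6 (i - a) (a - 1 - j) (by omega) (by omega) (by omega)
      rw [(eb i c1).1, (eb i c1).2, (ea j c2).1, (ea j c2).2] at this
      exact this.swapr
    · have := f4 (i - a) (j - a) (by omega) (by omega) (by omega)
      rw [(eb i c1).1, (eb i c1).2, (eb j c2).1, (eb j c2).2] at this
      exact this

theorem ordT_ev {a p q K : ℕ} {g : ℕ → ℤ} (h : OrdT a p q K (ax a g) (aw a g)) :
    ∀ u v, u < v → v ≤ 2 * a → Bey (ev a p q K u v + a) (g u) (g v) := by
  intro u v huv hv
  unfold ev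
  split_ifs with c1 c2
  · have := h.ox (a - v) (a - u) (by omega) (by omega)
    rw [ax, ax, show a - (a - u) = u by omega, show a - (a - v) = v by omega] at this
    generalize cl (a - v + 1) p (a - u) = c at *
    simp only [Bey] at *
    split_ifs at this <;> omega
  · have := h.oc (a - u) (v - a) (by omega) (by omega) (by omega)
    rw [ax, aw, show a - (a - u) = u by omega, show a + (v - a) = v by omega] at this
    generalize cr p q K (a - u) (v - a) = c at *
    simp only [Bey] at *
    split_ifs at this <;> omega
  · have := h.ow (u - a) (v - a) (by omega) (by omega)
    rw [aw, aw, show a + (u - a) = u by omega, show a + (v - a) = v by omega] at this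
    generalize cl (u - a + 1) q (v - a) = c at *
    simp only [Bey] at *
    split_ifs at this <;> omega

theorem ev_ordT {a p q K : ℕ} {g : ℕ → ℤ} (hp1 : 1 ≤ p) (hq1 : 1 ≤ q)
    (h : ∀ u v, u < v → v ≤ 2 * a → Bey (ev a p q K u v + a) (g u) (g v)) :
    OrdT a p q K (ax a g) (aw a g) := by
  refine ⟨?_, ?_, ?_⟩
  · intro i j hij hj
    have := h (a - j) (a - i) (by omega) (by omega)
    rw [ev, if_pos (by omega), show a - (a - i) = i by omega, show a - (a - j) = j by omega] at this
    unfold ax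
    generalize cl (i + 1) p j = c at *
    simp only [Bey] at *
    split_ifs <;> omega
  · intro i j hij hj
    have := h (a + i) (a + j) (by omega) (by omega)
    have e : ev a p q K (a + i) (a + j) % 2 = cl (i + 1) q j % 2 := by
      rw [ev, if_neg (by omega)]
      split_ifs with c
      · rw [cr_far (by omega)]
        unfold cl
        omega
      · rw [show a + i - a = i by omega, show a + j - a = j by omega]
    unfold aw
    generalize cl (i + 1) q j = c at *
    generalize ev a p q K (a + i) (a + j) = d at *
    simp only [Bey] at *
    split_ifs <;> omega
  · intro i j hi hj hij
    have := h (a - i) (a + j) (by omega) (by omega)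
    have e : ev a p q K (a - i) (a + j) % 2 = cr p q K i j % 2 := by
      rw [ev]
      split_ifs with c1 c2
      · rw [cr_far (by omega)]
        unfold cl
        omega
      · rw [show a - (a - i) = i by omega, show a + j - a = j by omega]
      · omega
    unfold ax aw
    generalize cr p q K i j = c at *
    generalize ev a p q K (a - i) (a + j) = d at *
    simp only [Bey] at *
    split_ifs <;> omega

/-- The integer layer of a face. -/
def fv {n : ℕ} (σ : Equiv.Perm (Fin n)) (i : ℕ) : ℤ := (faceVal σ i : ℤ)

theorem fv_lt {n : ℕ} (σ : Equiv.Perm (Fin n)) (u v : Fin n) : fv σ u < fv σ v ↔ σ u < σ v := by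
  simp [fv, faceVal]

theorem fv_inj {n : ℕ} (σ : Equiv.Perm (Fin n)) (u v : ℕ) (huv : u < v) (hv : v < n) :
    fv σ u ≠ fv σ v := by
  have hu : u < n := by omega
  simp only [fv, faceVal, hu, hv, dif_pos]
  intro h
  have h1 : σ ⟨u, hu⟩ = σ ⟨v, hv⟩ := by
    apply Fin.ext
    exact_mod_cast h
  have := congrArg Fin.val (σ.injective h1)
  simp at this
  omega

theorem ncr_cast (a b c d : ℕ) :
    ¬ Xor' (StrictlyBetween c a b) (StrictlyBetween d a b) ↔ NCr a b c d := by
  unfold StrictlyBetween NCr Xor'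
  have e : ∀ y : ℕ, (min (a : ℤ) b < y ∧ (y : ℤ) < max (a : ℤ) b) ↔
      (min a b < y ∧ y < max a b) := fun y => by omega
  rw [e c, e d]
  unfold Xor
  tauto

theorem valid_iff {a : ℕ} (σ : Equiv.Perm (Fin (a + a + 1))) :
    ValidLayerOrdering (a + a + 1) (fun i => if i < a then MV.M else MV.V) σ ↔ Lay a (fv σ) := by
  constructor
  · rintro ⟨h1, h2⟩
    refine ⟨?_, ?_, ?_⟩
    · intro i hi
      have := h1 i (by omega)
      simp only [hi, if_true, true_and, reduceCtorEq, false_and, or_false] at this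
      simp only [Nat.even_iff] at this
      simp only [Bey, fv]
      split_ifs at this <;> omega
    · intro i hi hi2
      have := h1 i (by omega)
      simp only [show ¬ i < a by omega, if_false, true_and, reduceCtorEq, false_and,
        false_or] at this
      simp only [Nat.odd_iff] at this
      simp only [Bey, fv]
      split_ifs at this <;> omega
    · intro i j hi hj hij
      exact (ncr_cast _ _ _ _).mp (h2 i j (by omega) (by omega) hij)
  · intro h
    refine ⟨?_, ?_⟩
    · intro i hi
      rcases Nat.lt_or_ge i a with c | c
      · have := h.m i c
        simp only [c, if_true, true_and, reduceCtorEq, false_and, or_false]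
        simp only [Nat.even_iff]
        simp only [Bey, fv] at this
        split_ifs <;> omega
      · have := h.v i c (by omega)
        simp only [show ¬ i < a by omega, if_false, true_and, reduceCtorEq, false_and, false_or]
        simp only [Nat.odd_iff]
        simp only [Bey, fv] at this
        split_ifs <;> omega
    · intro i j hi hj hij
      exact (ncr_cast _ _ _ _).mpr (h.nc i j (by omega) (by omega) hij)

/-- The relation on faces attached to a parameter triple. -/
def FRel (a p q K u v : ℕ) : Prop :=
  (u < v ∧ (ev a p q K u v + a) % 2 = 1) ∨ (v < u ∧ (ev a p q K v u + a) % 2 = 0)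

theorem rel_trans {a p q K u v w : ℕ} (hT : Adm a p q K) (h1 : FRel a p q K u v)
    (h2 : FRel a p q K v w) : FRel a p q K u w := by
  unfold FRel at *
  rcases Nat.lt_trichotomy u w with c | c | c
  · rcases h1 with ⟨a1, a2⟩ | ⟨a1, a2⟩ <;> rcases h2 with ⟨b1, b2⟩ | ⟨b1, b2⟩
    · have t := ev_tri hT a1 b1
      omega
    · have t := ev_tri hT c b1
      omega
    · have t := ev_tri hT a1 c
      omega
    · omega
  · subst c
    omega
  · rcases h1 with ⟨a1, a2⟩ | ⟨a1, a2⟩ <;> rcases h2 with ⟨b1, b2⟩ | ⟨b1, b2⟩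
    · omega
    · have t := ev_tri hT c a1
      omega
    · have t := ev_tri hT b1 c
      omega
    · have t := ev_tri hT b1 a1
      omega

theorem ordT_iff_rel {a p q K : ℕ} (hT : Adm a p q K) (σ : Equiv.Perm (Fin (a + a + 1))) :
    OrdT a p q K (ax a (fv σ)) (aw a (fv σ)) ↔ ∀ u v, σ u < σ v ↔ FRel a p q K u v := by
  constructor
  · intro h u v
    have h1 := ordT_ev h
    rw [← fv_lt]
    have hu := u.2
    have hv := v.2
    rcases Nat.lt_trichotomy u v with c | c | c
    · have := h1 u v c (by omega)
      unfold Bey at this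
      unfold FRel
      omega
    · rw [c]
      unfold FRel
      omega
    · have := h1 v u c (by omega)
      unfold Bey at this
      unfold FRel
      omega
  · intro h
    refine ev_ordT hT.1 hT.2.2.1 ?_
    intro u v huv hv
    have h1 := h ⟨u, by omega⟩ ⟨v, by omega⟩
    rw [← fv_lt] at h1
    have h2 := fv_inj σ u v huv (by omega)
    unfold FRel at h1
    simp only at h1
    unfold Bey
    omega

theorem exists_sigma {a p q K : ℕ} (hT : Adm a p q K) :
    ∃ σ : Equiv.Perm (Fin (a + a + 1)), OrdT a p q K (ax a (fv σ)) (aw a (fv σ)) := by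
  obtain ⟨σ, hσ⟩ := exists_perm (n := a + a + 1) (fun u v => FRel a p q K u v)
    (fun u => by unfold FRel; omega) (fun u v w h1 h2 => rel_trans hT h1 h2) (by
      intro u v huv
      have : (u : ℕ) ≠ v := fun h => huv (Fin.ext h)
      unfold FRel
      omega)
  exact ⟨σ, (ordT_iff_rel hT σ).mpr hσ⟩

/-- The finite set of admissible parameters. -/
def params (a : ℕ) : Finset (Σ _ : ℕ × ℕ, ℕ) :=
  (Finset.Icc 1 a ×ˢ Finset.Icc 1 a).sigma fun pq =>
    Finset.Icc (max pq.1 pq.2)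
      (if pq.2 = pq.1 + 1 ∨ pq.1 = pq.2 + 1 then a else max pq.1 pq.2)

theorem mem_params (a : ℕ) (t : Σ _ : ℕ × ℕ, ℕ) : t ∈ params a ↔ Adm a t.1.1 t.1.2 t.2 := by
  obtain ⟨⟨p, q⟩, K⟩ := t
  simp only [params, Finset.mem_sigma, Finset.mem_product, Finset.mem_Icc, Adm]
  split_ifs with h <;> omega

theorem sum_tri (a n : ℕ) (h : n + 1 ≤ a) :
    2 * (∑ p ∈ Finset.Icc 1 n, (a - (p + 1))) + n * (n + 1) + 2 * n = 2 * a * n := by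
  induction n with
  | zero => simp
  | succ n ih =>
    rw [Finset.sum_Icc_succ_top (by omega)]
    have := ih (by omega)
    obtain ⟨c, rfl⟩ : ∃ c, a = n + 1 + 1 + c := ⟨a - (n + 1 + 1), by omega⟩
    rw [show n + 1 + 1 + c - (n + 1 + 1) = c by omega]
    nlinarith

theorem card_params (a : ℕ) (ha : 4 ≤ a) : (params a).card = 2 * a ^ 2 - 3 * a + 2 := by
  have e : ∀ pq ∈ Finset.Icc 1 a ×ˢ Finset.Icc 1 a, (Finset.Icc (max pq.1 pq.2)
      (if pq.2 = pq.1 + 1 ∨ pq.1 = pq.2 + 1 then a else max pq.1 pq.2)).card =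
      1 + (if pq.2 = pq.1 + 1 then a - pq.2 else 0) +
        (if pq.1 = pq.2 + 1 then a - pq.1 else 0) := by
    rintro ⟨p, q⟩ h
    simp only [Finset.mem_product, Finset.mem_Icc] at h
    simp only [Nat.card_Icc]
    split_ifs <;> omega
  have s : ∀ p ∈ Finset.Icc 1 a,
      (∑ q ∈ Finset.Icc 1 a, if q = p + 1 then a - q else 0) = a - (p + 1) := by
    intro p hp
    rw [Finset.sum_ite_eq']
    simp only [Finset.mem_Icc] at *
    split_ifs <;> omega
  rw [params, Finset.card_sigma, Finset.sum_congr rfl e, Finset.sum_add_distrib,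
    Finset.sum_add_distrib, Finset.sum_product, Finset.sum_product, Finset.sum_product_right]
  simp only
  rw [Finset.sum_congr rfl s]
  obtain ⟨b, rfl⟩ : ∃ b, a = b + 1 := ⟨a - 1, by omega⟩
  have t := sum_tri (b + 1) b le_rfl
  have t2 : (∑ p ∈ Finset.Icc 1 (b + 1), (b + 1 - (p + 1))) =
      ∑ p ∈ Finset.Icc 1 b, (b + 1 - (p + 1)) := by
    rw [Finset.sum_Icc_succ_top (by omega)]
    omega
  rw [t2]
  simp only [Finset.sum_const, Nat.card_Icc, smul_eq_mul]
  generalize (∑ p ∈ Finset.Icc 1 b, (b + 1 - (p + 1))) = S at *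
  have h1 : 3 * (b + 1) ≤ 2 * (b + 1) ^ 2 := by nlinarith
  simp only [Nat.add_sub_cancel]
  zify [h1]
  zify at t
  nlinarith

/-- Theorem: for `a ≥ 4`, the assignment `M^a V^a` on the `1 × (2a+1)` strip
folds in `2a² − 3a + 2` ways. -/
theorem stmt4 (a : ℕ) (ha : 4 ≤ a) :
    foldCount (a + a + 1) (fun i => if i < a then MV.M else MV.V) =
      2 * a ^ 2 - 3 * a + 2 := by
  have hex : ∀ t : {t // t ∈ params a}, ∃ σ : Equiv.Perm (Fin (a + a + 1)),
      OrdT a t.1.1.1 t.1.1.2 t.1.2 (ax a (fv σ)) (aw a (fv σ)) :=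
    fun t => exists_sigma ((mem_params a t.1).mp t.2)
  choose f hf using hex
  have hval : ∀ t, ValidLayerOrdering (a + a + 1) (fun i => if i < a then MV.M else MV.V) (f t) := by
    intro t
    refine (valid_iff (f t)).mpr (two_lay (ordT_two ((mem_params a t.1).mp t.2) (hf t) ?_))
    unfold ax aw
    split_ifs <;> simp
  have hb : Function.Bijective (fun t => (⟨f t, hval t⟩ : {σ : Equiv.Perm (Fin (a + a + 1)) //
      ValidLayerOrdering (a + a + 1) (fun i => if i < a then MV.M else MV.V) σ})) := by
    constructor
    · intro t s hts
      have h1 : f t = f s := congrArg Subtype.val hts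
      have h2 := hf t
      rw [h1] at h2
      have h3 := adm_unique ((mem_params a t.1).mp t.2) ((mem_params a s.1).mp s.2) h2 (hf s)
      obtain ⟨⟨⟨p, q⟩, K⟩, ht⟩ := t
      obtain ⟨⟨⟨p1, q1⟩, K1⟩, hs⟩ := s
      simp only at h3
      obtain ⟨rfl, rfl, rfl⟩ := h3
      rfl
    · rintro ⟨σ, hσ⟩
      have h1 := lay_two (fun u v huv hv => fv_inj σ u v huv (by omega)) ((valid_iff σ).mp hσ)
      obtain ⟨p, q, K, hT, h2⟩ := classify h1 (by omega)
      refine ⟨⟨⟨⟨p, q⟩, K⟩, (mem_params a _).mpr hT⟩, ?_⟩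
      apply Subtype.ext
      apply perm_unique
      intro u v
      have e1 := (ordT_iff_rel hT _).mp h2 u v
      have e2 := (ordT_iff_rel hT _).mp (hf ⟨⟨⟨p, q⟩, K⟩, (mem_params a _).mpr hT⟩) u v
      exact e2.trans e1.symm
  rw [foldCount, ← Nat.card_eq_of_bijective _ hb, ← card_params a ha]
  simp
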